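/- Let 𝓕 ⊆ C([n],k) be a left-compressed t-intersecting family, let g(𝓕) ∈ G_*(𝓕) and s = s⁺(g(𝓕)). Suppose g*_i(𝓕) ≠ ∅ and set j = s + t − i with j ≠ i, and let 𝓕₁ = 𝓕 ∪ 𝒟(g*_i(𝓕)') \ 𝒟(g*_j(𝓕)). Then ζ_{k−1}(𝓕₁) − ζ_{k−1}(𝓕) ≥ |g*_i(𝓕)|·C(n−s, k−i)·C(n−s−k+i, 2) + ζ_{i−1,s}(g*_i(𝓕), 𝓕|_[s])·C(n−s, k−i+1) + |g*_i(𝓕)|·(s−i+1)(k−i+1)·C(n−s, k−i+1) − |g*_j(𝓕)|·C(n−s, k−j−1)·C(n−s−k+j+1, 2) − ζ_{j−1,s}(g*_j(𝓕), 𝓕|_[s])·C(n−s, k−j) − |g*_j(𝓕)|·(s−j)(k−j+1)·C(n−s, k−j). -/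

import Mathlib

open Finset

/-- `[n] = {1, …, n}` as a finset of naturals. -/
def Iv (n : ℕ) : Finset ℕ := Finset.Icc 1 n

/-- The collection of `k`-element subsets of `[n]`. -/
def KSets (n k : ℕ) : Finset (Finset ℕ) := (Iv n).powersetCard k

/-- Codegree of `E` in the family `F`: the number of members of `F` containing `E`. -/
def codeg (F : Finset (Finset ℕ)) (E : Finset ℕ) : ℕ :=
  (F.filter fun A => E ⊆ A).card

/-- Codegree squared sum of a `k`-uniform family on `[n]`. -/
def co2 (n k : ℕ) (F : Finset (Finset ℕ)) : ℕ :=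
  ∑ E ∈ KSets n (k - 1), codeg F E ^ 2

/-- `t`-intersecting family. -/
def IntersectingT (t : ℕ) (F : Finset (Finset ℕ)) : Prop :=
  ∀ A ∈ F, ∀ B ∈ F, t ≤ (A ∩ B).card

/-- `ζ_u(F)`: the number of unordered pairs of distinct members of `F` meeting in
exactly `u` elements. -/
def zeta (u : ℕ) (F : Finset (Finset ℕ)) : ℕ :=
  ((F.offDiag.filter fun p => (p.1 ∩ p.2).card = u).image
    fun p => ({p.1, p.2} : Finset (Finset ℕ))).card

/-- `ζ_{u,v}(𝓖,𝓗)`: the number of unordered pairs `{F,G}` with `F ∈ 𝓖`, `G ∈ 𝓗`,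
`|F| = |G| = u+1`, `|F ∩ G| = u` and `v ∈ F ∩ G`. -/
def zeta2v (u v : ℕ) (G H : Finset (Finset ℕ)) : ℕ :=
  (((G ×ˢ H).filter fun p =>
      p.1.card = u + 1 ∧ p.2.card = u + 1 ∧ (p.1 ∩ p.2).card = u ∧ v ∈ p.1 ∩ p.2).image
    fun p => ({p.1, p.2} : Finset (Finset ℕ))).card

/-- The Hilton–Milner type family `H(n,k,t)`. -/
def HM (n k t : ℕ) : Finset (Finset ℕ) :=
  ((KSets n k).filter fun F => Iv t ⊆ F ∧ (F ∩ Finset.Icc (t + 1) (k + 1)).Nonempty) ∪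
    ((Iv t).image fun i => (Iv (k + 1)).erase i)

/-- The Frankl type family `A(n,k,t)`. -/
def AK (n k t : ℕ) : Finset (Finset ℕ) :=
  (KSets n k).filter fun F => t + 1 ≤ (F ∩ Iv (t + 2)).card

/-- Two families on `[n]` are isomorphic if one is the image of the other under a
permutation of `[n]` applied elementwise to each member. -/
def Isom (n : ℕ) (F G : Finset (Finset ℕ)) : Prop :=
  ∃ σ : Equiv.Perm ℕ, (∀ x ∈ Iv n, σ x ∈ Iv n) ∧ G = F.image fun A => A.image σ

/-- The elementary shift `δ_{ij}` of a single set. -/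
def shiftSet (i j : ℕ) (𝓐 : Finset (Finset ℕ)) (A : Finset ℕ) : Finset ℕ :=
  if j ∈ A ∧ i ∉ A ∧ insert i (A.erase j) ∉ 𝓐 then insert i (A.erase j) else A

/-- The shift operation `Δ_{ij}` on families. -/
def shiftFam (i j : ℕ) (𝓐 : Finset (Finset ℕ)) : Finset (Finset ℕ) :=
  𝓐.image (shiftSet i j 𝓐)

/-- Left-compressed family. -/
def LeftCompressed (n : ℕ) (F : Finset (Finset ℕ)) : Prop :=
  ∀ i j : ℕ, 1 ≤ i → i < j → j ≤ n → shiftFam i j F = F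

/-- `g` is a generating set of `F ⊆ C([n],k)`: its members are subsets of `[n]` of size at
most `k`, and `U(g) ∩ C([n],k) = F`. -/
def IsGenSet (n k : ℕ) (F g : Finset (Finset ℕ)) : Prop :=
  (∀ E ∈ g, E ⊆ Iv n ∧ E.card ≤ k) ∧
    (KSets n k).filter (fun A => ∃ E ∈ g, E ⊆ A) = F

/-- `s⁺` of a collection of finsets: the maximum element appearing. -/
def sPlus (g : Finset (Finset ℕ)) : ℕ := g.sup fun E => E.sup id

/-- `g*_i`: the members of `g` of size `i` containing `s`. -/
def gStar (g : Finset (Finset ℕ)) (s i : ℕ) : Finset (Finset ℕ) :=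
  g.filter fun E => s ∈ E ∧ E.card = i

/-- `𝒟(ℰ) = ∪_{E ∈ ℰ} {B ∈ C([n],k) : B ∩ [s⁺(E)] = E}`. -/
def Dcal (n k : ℕ) (ℰ : Finset (Finset ℕ)) : Finset (Finset ℕ) :=
  (KSets n k).filter fun B => ∃ E ∈ ℰ, B ∩ Iv (E.sup id) = E

/-- The family of `k`-subsets of `[n]` generated by `g`. -/
def genFam (n k : ℕ) (g : Finset (Finset ℕ)) : Finset (Finset ℕ) :=
  (KSets n k).filter fun A => ∃ E ∈ g, E ⊆ A

/-- Integer binomial coefficient: `C(a,b) = 0` when `b < 0` or `b > a`. -/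
def ichoose (a b : ℤ) : ℤ :=
  if 0 ≤ b ∧ b ≤ a then (a.toNat.choose b.toNat : ℤ) else 0

/-!
Every family in sight is determined by its traces on `[s]`, so it is the cylinder of all `k`-subsets
of `[n]` with a trace in some prescribed collection. Passing from `𝓕` to `𝓕₁` adds the cylinder over
`g*_i'` and removes the cylinder over `g*_j`. Hence `ζ(𝓕₁) - ζ(𝓕)` is the number of pairs in `𝓕₁`
with a member over `g*_i'` minus the number of pairs in `𝓕` with a member over `g*_j`.

Such a pair differs by exchanging one element for another: both elements lie outside `[s]`, both lie
inside `[s]`, or the exchange crosses the boundary of `[s]`. The three summands of either sign bound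
these three kinds of pairs, except that the exchanges inside `[s]` which remove `s` from a member of
`g*_j` are counted in the last one, turning the factor `k - j` into `k - j + 1`. Left-compression
puts enough traces into `𝓕₁` for the lower bound; for the upper bound, the generators being an
antichain rules out the exchanges that shrink a trace in `g*_j`.
-/

section SwapEdges

variable {α : Type*} [DecidableEq α] {A B S V : Finset α} {k m : ℕ}
  {𝓖 𝓗 𝓣 : Finset (Finset α)}

/-- Adjacency in the Johnson graphs: each of the two sets arises from the other by exchanging a
single element. For distinct `k`-sets this says that they meet in `k - 1` elements, without
truncated subtraction. -/
def OneSwap (A B : Finset α) : Prop :=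
  #(A \ B) = 1 ∧ #(B \ A) = 1

instance : DecidableRel (OneSwap (α := α)) := fun A B =>
  inferInstanceAs (Decidable (#(A \ B) = 1 ∧ #(B \ A) = 1))

lemma oneSwap_comm : OneSwap A B ↔ OneSwap B A :=
  and_comm

lemma OneSwap.ne (h : OneSwap A B) : A ≠ B := by
  rintro rfl
  simp [OneSwap] at h

lemma OneSwap.card_eq (h : OneSwap A B) : #A = #B :=
  card_sdiff_eq_card_sdiff_iff.1 (h.1.trans h.2.symm)

lemma oneSwap_iff_card_inter (hA : #A = k) (hB : #B = k) :
    OneSwap A B ↔ A ≠ B ∧ #(A ∩ B) = k - 1 := by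
  have hAB := card_sdiff_add_card_inter A B
  have hBA := card_sdiff_add_card_inter B A
  rw [inter_comm] at hBA
  refine ⟨fun h => ⟨h.ne, by have := h.1; omega⟩, ?_⟩
  rintro ⟨hne, hcard⟩
  have hpos : 0 < #(A \ B) := by
    rw [card_pos, sdiff_nonempty]
    exact fun hsub => hne (eq_of_subset_of_card_le hsub (by omega))
  exact ⟨by omega, by omega⟩

lemma oneSwap_iff_exists :
    OneSwap A B ↔ ∃ x ∉ A, ∃ y ∈ A, B = insert x (A.erase y) := by
  simp only [OneSwap, card_eq_one]
  constructor
  · rintro ⟨⟨y, hy⟩, x, hx⟩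
    simp only [Finset.ext_iff, mem_sdiff, mem_singleton] at hx hy
    refine ⟨x, by grind, y, by grind, ?_⟩
    ext z
    grind
  · rintro ⟨x, hx, y, hy, rfl⟩
    exact ⟨⟨y, by grind⟩, x, by grind⟩

/-- The paper's `ζ(𝓖, 𝓗)` as a set: the unordered pairs `{A, B}` with `A ∈ 𝓖` and `B ∈ 𝓗` that
differ by a single exchange. -/
def swapEdges (𝓖 𝓗 : Finset (Finset α)) : Finset (Sym2 (Finset α)) :=
  ((𝓖 ×ˢ 𝓗).filter fun p => OneSwap p.1 p.2).image fun p => s(p.1, p.2)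

lemma mk_mem_swapEdges :
    s(A, B) ∈ swapEdges 𝓖 𝓗 ↔ OneSwap A B ∧ (A ∈ 𝓖 ∧ B ∈ 𝓗 ∨ B ∈ 𝓖 ∧ A ∈ 𝓗) := by
  simp only [swapEdges, mem_image, mem_filter, mem_product, Prod.exists, Sym2.eq_iff]
  constructor
  · rintro ⟨A', B', ⟨hmem, hswap⟩, ⟨rfl, rfl⟩ | ⟨rfl, rfl⟩⟩
    exacts [⟨hswap, .inl hmem⟩, ⟨oneSwap_comm.1 hswap, .inr hmem⟩]
  · rintro ⟨hswap, hmem | hmem⟩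
    exacts [⟨A, B, ⟨hmem, hswap⟩, .inl ⟨rfl, rfl⟩⟩,
      ⟨B, A, ⟨hmem, oneSwap_comm.1 hswap⟩, .inr ⟨rfl, rfl⟩⟩]

lemma exists_of_mem_swapEdges {q : Sym2 (Finset α)} (hq : q ∈ swapEdges 𝓖 𝓗) :
    ∃ A ∈ 𝓖, ∃ B ∈ 𝓗, OneSwap A B ∧ s(A, B) = q := by
  simp only [swapEdges, mem_image, mem_filter, mem_product] at hq
  obtain ⟨p, ⟨⟨hA, hB⟩, hswap⟩, rfl⟩ := hq
  exact ⟨p.1, hA, p.2, hB, hswap, rfl⟩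

lemma swapEdges_self_sdiff (𝓕 𝓖 : Finset (Finset α)) :
    swapEdges 𝓕 𝓕 \ swapEdges 𝓖 𝓖 = swapEdges (𝓕 \ 𝓖) 𝓕 := by
  ext q
  induction q with | _ A B
  simp only [mem_sdiff, mk_mem_swapEdges]
  tauto

lemma card_swapEdges_self_sub (𝓕 𝓖 : Finset (Finset α)) :
    (#(swapEdges 𝓕 𝓕) : ℤ) - #(swapEdges 𝓖 𝓖) =
      #(swapEdges (𝓕 \ 𝓖) 𝓕) - #(swapEdges (𝓖 \ 𝓕) 𝓖) := by
  have h𝓕 := card_sdiff_add_card_inter (swapEdges 𝓕 𝓕) (swapEdges 𝓖 𝓖)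
  have h𝓖 := card_sdiff_add_card_inter (swapEdges 𝓖 𝓖) (swapEdges 𝓕 𝓕)
  rw [inter_comm] at h𝓖
  rw [← swapEdges_self_sdiff, ← swapEdges_self_sdiff]
  omega

lemma oneSwap_iff_exists_insert_insert :
    OneSwap A B ↔ ∃ S, ∃ x ∉ S, ∃ y ∉ S, x ≠ y ∧ A = insert x S ∧ B = insert y S := by
  rw [oneSwap_iff_exists]
  constructor
  · rintro ⟨y, hy, x, hx, rfl⟩
    exact ⟨A.erase x, x, by simp, y, by grind, by grind, (insert_erase hx).symm, rfl⟩
  · rintro ⟨S, x, hx, y, hy, hxy, rfl, rfl⟩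
    exact ⟨y, by grind, x, mem_insert_self x S, by rw [erase_insert hx]⟩

lemma filter_inf_swapEdges_powersetCard (hS : S ∈ V.powersetCard m) :
    {q ∈ swapEdges (V.powersetCard (m + 1)) (V.powersetCard (m + 1)) | q.inf = S} =
      ((V \ S).offDiag.image Sym2.mk.uncurry).image (Sym2.map (insert · S)) := by
  obtain ⟨hSV, hSm⟩ := mem_powersetCard.1 hS
  have inf_insert {x y : α} (hx : x ∉ S) (hxy : x ≠ y) : insert x S ∩ insert y S = S := by grind
  ext q
  simp only [mem_filter, mem_image, mem_offDiag, mem_sdiff, Prod.exists]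
  constructor
  · rintro ⟨hq, hinf⟩
    obtain ⟨A, hA, B, hB, hswap, rfl⟩ := exists_of_mem_swapEdges hq
    obtain ⟨S', x, hx, y, hy, hxy, rfl, rfl⟩ := oneSwap_iff_exists_insert_insert.1 hswap
    obtain rfl : S' = S := by
      rw [← hinf, Sym2.inf_mk, inf_eq_inter]
      grind
    have hxV := (mem_powersetCard.1 hA).1 (mem_insert_self x S')
    have hyV := (mem_powersetCard.1 hB).1 (mem_insert_self y S')
    exact ⟨s(x, y), ⟨x, y, ⟨⟨hxV, hx⟩, ⟨hyV, hy⟩, hxy⟩, rfl⟩, rfl⟩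
  · rintro ⟨_, ⟨x, y, ⟨⟨hxV, hx⟩, ⟨hyV, hy⟩, hxy⟩, rfl⟩, rfl⟩
    have mem_level {z : α} (hzV : z ∈ V) (hz : z ∉ S) : insert z S ∈ V.powersetCard (m + 1) :=
      mem_powersetCard.2 ⟨insert_subset hzV hSV, by rw [card_insert_of_notMem hz, hSm]⟩
    exact ⟨mk_mem_swapEdges.2 ⟨oneSwap_iff_exists_insert_insert.2
      ⟨S, x, hx, y, hy, hxy, rfl, rfl⟩, .inl ⟨mem_level hxV hx, mem_level hyV hy⟩⟩,
      inf_insert hx hxy⟩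

lemma injOn_sym2_map {β γ : Type*} {f : β → γ} {D : Set β} (hf : Set.InjOn f D) :
    Set.InjOn (Sym2.map f) {q | ∀ x ∈ q, x ∈ D} := by
  intro q hq r hr h
  induction q with | _ a b
  induction r with | _ c d
  simp only [Set.mem_ofPred_eq, Sym2.mem_iff, forall_eq_or_imp, forall_eq] at hq hr
  simpa only [Sym2.map_mk, Sym2.eq_iff, hf.eq_iff hq.1 hr.1, hf.eq_iff hq.1 hr.2,
    hf.eq_iff hq.2 hr.1, hf.eq_iff hq.2 hr.2] using h

/-- An edge between two `(m + 1)`-sets is an `m`-set, their intersection, together with an unordered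
pair of further points. -/
theorem card_swapEdges_powersetCard_succ (V : Finset α) (m : ℕ) :
    #(swapEdges (V.powersetCard (m + 1)) (V.powersetCard (m + 1))) =
      (#V).choose m * (#V - m).choose 2 := by
  have hmaps : ∀ q ∈ swapEdges (V.powersetCard (m + 1)) (V.powersetCard (m + 1)),
      q.inf ∈ V.powersetCard m := by
    intro q hq
    obtain ⟨A, hA, B, hB, hswap, rfl⟩ := exists_of_mem_swapEdges hq
    rw [mem_powersetCard] at hA hB
    exact mem_powersetCard.2 ⟨inter_subset_left.trans hA.1,
      ((oneSwap_iff_card_inter hA.2 hB.2).1 hswap).2⟩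
  rw [card_eq_sum_card_fiberwise hmaps, ← card_powersetCard]
  refine sum_const_nat fun S hS => ?_
  obtain ⟨hSV, hSm⟩ := mem_powersetCard.1 hS
  rw [filter_inf_swapEdges_powersetCard hS, card_image_of_injOn, Sym2.card_image_offDiag,
    card_sdiff_of_subset hSV, hSm]
  refine (injOn_sym2_map (insert_inj_on S)).mono fun q hq => ?_
  obtain ⟨⟨x, y⟩, hxy, rfl⟩ := mem_image.1 (mem_coe.1 hq)
  simp only [mem_offDiag, mem_sdiff] at hxy
  simp only [Function.uncurry_apply_pair, Set.mem_ofPred_eq, Sym2.mem_iff, forall_eq_or_imp,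
    forall_eq]
  exact ⟨hxy.1.2, hxy.2.1.2⟩

lemma image_toFinset_swapEdges (𝓖 𝓗 : Finset (Finset α)) :
    (swapEdges 𝓖 𝓗).image Sym2.toFinset =
      ((𝓖 ×ˢ 𝓗).filter fun p => OneSwap p.1 p.2).image fun p => {p.1, p.2} := by
  simp only [swapEdges, image_image, Function.comp_def, Sym2.toFinset_mk_eq]

lemma sym2_toFinset_injective {β : Type*} [DecidableEq β] :
    Function.Injective (Sym2.toFinset : Sym2 β → Finset β) := fun q r h =>
  Sym2.ext fun x => by rw [← Sym2.mem_toFinset, h, Sym2.mem_toFinset]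

lemma card_swapEdges_le_card_swapEdges_image_erase {v : α}
    (hv𝓖 : ∀ E ∈ 𝓖, v ∈ E) (hv𝓗 : ∀ H ∈ 𝓗, v ∈ H)
    (h𝓣 : ∀ E ∈ 𝓖, ∀ H ∈ 𝓗, OneSwap E H → H.erase v ∈ 𝓣) :
    #(swapEdges 𝓖 𝓗) ≤ #(swapEdges (𝓖.image (·.erase v)) 𝓣) := by
  refine card_le_card_of_injOn (Sym2.map (·.erase v)) ?_
    ((injOn_sym2_map (erase_injOn' v)).mono ?_)
  · intro q hq
    obtain ⟨E, hE, H, hH, hswap, rfl⟩ := exists_of_mem_swapEdges hq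
    have hEH : E.erase v \ H.erase v = E \ H := by grind
    have hHE : H.erase v \ E.erase v = H \ E := by grind
    refine mk_mem_swapEdges.2 ⟨?_, .inl ⟨mem_image_of_mem _ hE, h𝓣 E hE H hH hswap⟩⟩
    rwa [OneSwap, hEH, hHE]
  · intro q hq
    obtain ⟨E, hE, H, hH, -, rfl⟩ := exists_of_mem_swapEdges hq
    simpa using ⟨hv𝓖 E hE, hv𝓗 H hH⟩

/-- An edge that loses `v` is determined by the member of `𝓖` and the point replacing `v`. -/
lemma card_swapEdges_le_add_card_mul {v : α} {I : Finset α} {e : ℕ}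
    (h𝓖 : 𝓖 ⊆ I.powersetCard e) (hv : ∀ E ∈ 𝓖, v ∈ E) (h𝓣 : 𝓣 ⊆ I.powerset) :
    #(swapEdges 𝓖 𝓣) ≤ #(swapEdges 𝓖 (𝓣.filter (v ∈ ·))) + #𝓖 * (#I - e) := by
  have hsub : swapEdges 𝓖 𝓣 ⊆ swapEdges 𝓖 (𝓣.filter (v ∈ ·)) ∪
      (𝓖.sigma (I \ ·)).image fun p => s(p.1, insert p.2 (p.1.erase v)) := by
    intro q hq
    obtain ⟨E, hE, H, hH, hswap, rfl⟩ := exists_of_mem_swapEdges hq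
    by_cases hvH : v ∈ H
    · exact mem_union_left _ (mk_mem_swapEdges.2 ⟨hswap, .inl ⟨hE, mem_filter.2 ⟨hH, hvH⟩⟩⟩)
    obtain ⟨x, hxE, y, hyE, rfl⟩ := oneSwap_iff_exists.1 hswap
    obtain rfl : v = y := by
      by_contra hvy
      exact hvH (mem_insert_of_mem (mem_erase.2 ⟨hvy, hv E hE⟩))
    have hxI : x ∈ I := mem_powerset.1 (h𝓣 hH) (mem_insert_self x _)
    exact mem_union_right _ (mem_image.2
      ⟨⟨E, x⟩, mem_sigma.2 ⟨hE, mem_sdiff.2 ⟨hxI, hxE⟩⟩, rfl⟩)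
  refine (card_le_card hsub).trans ((card_union_le _ _).trans (Nat.add_le_add_left ?_ _))
  refine card_image_le.trans (card_sigma _ _ |>.trans (sum_const_nat fun E hE => ?_)).le
  obtain ⟨hEI, hEe⟩ := mem_powersetCard.1 (h𝓖 hE)
  rw [card_sdiff_of_subset hEI, hEe]

end SwapEdges

section Cylinder

variable {α : Type*} [DecidableEq α] {A B E H I T X : Finset α} {e k : ℕ}
  {𝓖 𝓣 : Finset (Finset α)}

lemma union_inter_eq_of_subset_of_disjoint (hE : E ⊆ I) (hT : Disjoint T I) : (E ∪ T) ∩ I = E := by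
  rw [union_inter_distrib_right, inter_eq_left.2 hE, disjoint_iff_inter_eq_empty.1 hT, union_empty]

lemma union_sdiff_eq_of_subset_of_disjoint (hE : E ⊆ I) (hT : Disjoint T I) : (E ∪ T) \ I = T := by
  rw [union_sdiff_distrib, sdiff_eq_empty_iff_subset.2 hE, sdiff_eq_self_of_disjoint hT,
    empty_union]

lemma inter_union_sdiff_self (A I : Finset α) : A ∩ I ∪ A \ I = A :=
  sup_inf_sdiff A I

lemma oneSwap_iff_of_inter_eq (h : A ∩ I = B ∩ I) : OneSwap A B ↔ OneSwap (A \ I) (B \ I) := by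
  simp only [Finset.ext_iff, mem_inter] at h
  have hAB : A \ B = (A \ I) \ (B \ I) := by grind
  have hBA : B \ A = (B \ I) \ (A \ I) := by grind
  rw [OneSwap, OneSwap, hAB, hBA]

lemma oneSwap_iff_of_sdiff_eq (h : A \ I = B \ I) : OneSwap A B ↔ OneSwap (A ∩ I) (B ∩ I) := by
  simp only [Finset.ext_iff, mem_sdiff] at h
  have hAB : A \ B = (A ∩ I) \ (B ∩ I) := by grind
  have hBA : B \ A = (B ∩ I) \ (A ∩ I) := by grind
  rw [OneSwap, OneSwap, hAB, hBA]

/-- The `k`-subsets of the ground set `X` whose trace on `I` belongs to `𝓣`. All families of the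
generating set method are of this form, with `X = [n]` and `I = [s]`. -/
def cylinder (X I : Finset α) (k : ℕ) (𝓣 : Finset (Finset α)) : Finset (Finset α) :=
  (X.powersetCard k).filter fun A => A ∩ I ∈ 𝓣

lemma mem_cylinder : A ∈ cylinder X I k 𝓣 ↔ (A ⊆ X ∧ #A = k) ∧ A ∩ I ∈ 𝓣 := by
  rw [cylinder, mem_filter, mem_powersetCard]

lemma disjoint_of_mem_powersetCard_sdiff {m : ℕ} (hT : T ∈ (X \ I).powersetCard m) :
    Disjoint T I :=
  disjoint_of_subset_left (mem_powersetCard.1 hT).1 sdiff_disjoint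

lemma union_mem_cylinder (hI : I ⊆ X) (he : e ≤ k) (hE : E ∈ I.powersetCard e) (hE𝓣 : E ∈ 𝓣)
    (hT : T ∈ (X \ I).powersetCard (k - e)) : E ∪ T ∈ cylinder X I k 𝓣 := by
  have hTI := disjoint_of_mem_powersetCard_sdiff hT
  rw [mem_powersetCard] at hE hT
  have hET : Disjoint E T := disjoint_of_subset_left hE.1 hTI.symm
  refine mem_cylinder.2 ⟨⟨union_subset (hE.1.trans hI) (hT.1.trans sdiff_subset), ?_⟩, ?_⟩
  · rw [card_union_of_disjoint hET, hE.2, hT.2, Nat.add_sub_cancel' he]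
  · rwa [union_inter_eq_of_subset_of_disjoint hE.1 hTI]

lemma sdiff_mem_powersetCard_of_mem_cylinder (hA : A ∈ cylinder X I k 𝓣) (hAe : #(A ∩ I) = e) :
    A \ I ∈ (X \ I).powersetCard (k - e) := by
  obtain ⟨⟨hAX, hAk⟩, -⟩ := mem_cylinder.1 hA
  have := card_sdiff_add_card_inter A I
  exact mem_powersetCard.2 ⟨sdiff_subset_sdiff hAX le_rfl, by omega⟩

lemma card_inter_of_mem_cylinder (h𝓖 : 𝓖 ⊆ I.powersetCard e) (hA : A ∈ cylinder X I k 𝓖) :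
    #(A ∩ I) = e :=
  (mem_powersetCard.1 (h𝓖 (mem_cylinder.1 hA).2)).2

lemma card_cylinder (hI : I ⊆ X) (he : e ≤ k) (h𝓖 : 𝓖 ⊆ I.powersetCard e) :
    #(cylinder X I k 𝓖) = #𝓖 * #((X \ I).powersetCard (k - e)) := by
  rw [← card_product]
  refine card_nbij' (fun A => (A ∩ I, A \ I)) (fun p => p.1 ∪ p.2) ?_ ?_ ?_ ?_
  · exact fun A hA => mem_product.2 ⟨(mem_cylinder.1 hA).2,
      sdiff_mem_powersetCard_of_mem_cylinder hA (card_inter_of_mem_cylinder h𝓖 hA)⟩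
  · rintro ⟨E, T⟩ hp
    obtain ⟨hE, hT⟩ := mem_product.1 hp
    exact union_mem_cylinder hI he (h𝓖 hE) hE hT
  · exact fun A _ => inter_union_sdiff_self A I
  · rintro ⟨E, T⟩ hp
    obtain ⟨hE, hT⟩ := mem_product.1 hp
    have hEI := (mem_powersetCard.1 (h𝓖 hE)).1
    have hTI := disjoint_of_mem_powersetCard_sdiff hT
    exact Prod.ext (union_inter_eq_of_subset_of_disjoint hEI hTI)
      (union_sdiff_eq_of_subset_of_disjoint hEI hTI)

lemma card_swapEdges_cylinder_of_inter_eq (hI : I ⊆ X) (he : e ≤ k)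
    (h𝓖 : 𝓖 ⊆ I.powersetCard e) (h𝓖𝓣 : 𝓖 ⊆ 𝓣) :
    #{q ∈ swapEdges (cylinder X I k 𝓖) (cylinder X I k 𝓣) | (q.map (· ∩ I)).IsDiag} =
      #𝓖 * #(swapEdges ((X \ I).powersetCard (k - e)) ((X \ I).powersetCard (k - e))) := by
  rw [← card_product]
  refine card_nbij' (fun q => ((q.map (· ∩ I)).inf, q.map (· \ I)))
    (fun p => p.2.map (p.1 ∪ ·)) ?_ ?_ ?_ ?_
  · intro q hq
    obtain ⟨hq, hdiag⟩ := mem_filter.1 hq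
    obtain ⟨A, hA, B, hB, hswap, rfl⟩ := exists_of_mem_swapEdges hq
    replace hdiag : A ∩ I = B ∩ I := hdiag
    have hAe := card_inter_of_mem_cylinder h𝓖 hA
    refine mem_product.2 ⟨?_, mk_mem_swapEdges.2 ⟨(oneSwap_iff_of_inter_eq hdiag).1 hswap, .inl
      ⟨sdiff_mem_powersetCard_of_mem_cylinder hA hAe,
        sdiff_mem_powersetCard_of_mem_cylinder hB (hdiag ▸ hAe)⟩⟩⟩
    simpa only [Sym2.map_mk, Sym2.inf_mk, ← hdiag, inf_idem] using (mem_cylinder.1 hA).2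
  · rintro ⟨E, q⟩ hp
    obtain ⟨hE, hq⟩ := mem_product.1 hp
    obtain ⟨S, hS, T, hT, hswap, rfl⟩ := exists_of_mem_swapEdges hq
    have hEI := (mem_powersetCard.1 (h𝓖 hE)).1
    have hSI := disjoint_of_mem_powersetCard_sdiff hS
    have hTI := disjoint_of_mem_powersetCard_sdiff hT
    have htrace : (E ∪ S) ∩ I = (E ∪ T) ∩ I := by
      simp only [union_inter_eq_of_subset_of_disjoint, hEI, hSI, hTI]
    refine mem_filter.2 ⟨mk_mem_swapEdges.2 ⟨(oneSwap_iff_of_inter_eq htrace).2 ?_, .inl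
      ⟨union_mem_cylinder hI he (h𝓖 hE) hE hS,
        union_mem_cylinder hI he (h𝓖 hE) (h𝓖𝓣 hE) hT⟩⟩, htrace⟩
    simpa only [union_sdiff_eq_of_subset_of_disjoint, hEI, hSI, hTI] using hswap
  · intro q hq
    obtain ⟨hq, hdiag⟩ := mem_filter.1 hq
    induction q with | _ A B
    replace hdiag : A ∩ I = B ∩ I := hdiag
    simp only [Sym2.map_mk, Sym2.inf_mk, hdiag, inf_idem, inter_union_sdiff_self]
    rw [← hdiag, inter_union_sdiff_self]
  · rintro ⟨E, q⟩ hp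
    obtain ⟨hE, hq⟩ := mem_product.1 hp
    obtain ⟨S, hS, T, hT, -, rfl⟩ := exists_of_mem_swapEdges hq
    have hEI := (mem_powersetCard.1 (h𝓖 hE)).1
    have hSI := disjoint_of_mem_powersetCard_sdiff hS
    have hTI := disjoint_of_mem_powersetCard_sdiff hT
    simp only [Sym2.map_mk, Sym2.inf_mk, inf_idem, union_inter_eq_of_subset_of_disjoint,
      union_sdiff_eq_of_subset_of_disjoint, hEI, hSI, hTI]

lemma card_swapEdges_cylinder_of_sdiff_eq (hI : I ⊆ X) (he : e ≤ k)
    (h𝓖 : 𝓖 ⊆ I.powersetCard e) (h𝓣 : 𝓣 ⊆ I.powerset) :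
    #{q ∈ swapEdges (cylinder X I k 𝓖) (cylinder X I k 𝓣) | (q.map (· \ I)).IsDiag} =
      #(swapEdges 𝓖 𝓣) * #((X \ I).powersetCard (k - e)) := by
  rw [← card_product]
  refine card_nbij' (fun q => (q.map (· ∩ I), (q.map (· \ I)).inf))
    (fun p => p.1.map (· ∪ p.2)) ?_ ?_ ?_ ?_
  · intro q hq
    obtain ⟨hq, hdiag⟩ := mem_filter.1 hq
    obtain ⟨A, hA, B, hB, hswap, rfl⟩ := exists_of_mem_swapEdges hq
    replace hdiag : A \ I = B \ I := hdiag
    refine mem_product.2 ⟨mk_mem_swapEdges.2 ⟨(oneSwap_iff_of_sdiff_eq hdiag).1 hswap, .inl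
      ⟨(mem_cylinder.1 hA).2, (mem_cylinder.1 hB).2⟩⟩, ?_⟩
    simpa only [Sym2.map_mk, Sym2.inf_mk, ← hdiag, inf_idem] using
      sdiff_mem_powersetCard_of_mem_cylinder hA (card_inter_of_mem_cylinder h𝓖 hA)
  · rintro ⟨q, T⟩ hp
    obtain ⟨hq, hT⟩ := mem_product.1 hp
    obtain ⟨E, hE, H, hH, hswap, rfl⟩ := exists_of_mem_swapEdges hq
    have hEI := mem_powersetCard.1 (h𝓖 hE)
    have hHI := mem_powerset.1 (h𝓣 hH)
    have hTI := disjoint_of_mem_powersetCard_sdiff hT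
    have hrest : (E ∪ T) \ I = (H ∪ T) \ I := by
      simp only [union_sdiff_eq_of_subset_of_disjoint, hEI.1, hHI, hTI]
    refine mem_filter.2 ⟨mk_mem_swapEdges.2 ⟨(oneSwap_iff_of_sdiff_eq hrest).2 ?_, .inl
      ⟨union_mem_cylinder hI he (h𝓖 hE) hE hT, union_mem_cylinder hI he
        (mem_powersetCard.2 ⟨hHI, hswap.card_eq ▸ hEI.2⟩) hH hT⟩⟩, hrest⟩
    simpa only [union_inter_eq_of_subset_of_disjoint, hEI.1, hHI, hTI] using hswap
  · intro q hq
    obtain ⟨hq, hdiag⟩ := mem_filter.1 hq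
    induction q with | _ A B
    replace hdiag : A \ I = B \ I := hdiag
    simp only [Sym2.map_mk, Sym2.inf_mk, hdiag, inf_idem, inter_union_sdiff_self]
    rw [← hdiag, inter_union_sdiff_self]
  · rintro ⟨q, T⟩ hp
    obtain ⟨hq, hT⟩ := mem_product.1 hp
    obtain ⟨E, hE, H, hH, -, rfl⟩ := exists_of_mem_swapEdges hq
    have hEI := (mem_powersetCard.1 (h𝓖 hE)).1
    have hHI := mem_powerset.1 (h𝓣 hH)
    have hTI := disjoint_of_mem_powersetCard_sdiff hT
    simp only [Sym2.map_mk, Sym2.inf_mk, inf_idem, union_inter_eq_of_subset_of_disjoint,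
      union_sdiff_eq_of_subset_of_disjoint, hEI, hHI, hTI]

lemma insert_erase_inter_of_mem_of_notMem {x y : α} (hx : x ∈ I) (hy : y ∉ I) :
    insert x (A.erase y) ∩ I = insert x (A ∩ I) := by
  grind

lemma sdiff_insert_erase {x y : α} (hx : x ∉ A) (hy : y ∈ A) : A \ insert x (A.erase y) = {y} := by
  grind

lemma insert_erase_sdiff {x : α} (hx : x ∉ A) (y : α) : insert x (A.erase y) \ A = {x} := by
  grind

lemma exists_eq_of_oneSwap_of_inter_ne_of_sdiff_ne
    (hlow : ¬B ∩ I ⊂ A ∩ I) (hswap : OneSwap A B) (hin : A ∩ I ≠ B ∩ I) (hout : A \ I ≠ B \ I) :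
    ∃ x ∈ I \ A, ∃ y ∈ A \ I, B = insert x (A.erase y) := by
  obtain ⟨x, hx, y, hy, rfl⟩ := oneSwap_iff_exists.1 hswap
  have hxI : x ∈ I := by
    by_contra hxI
    -- Then the exchange only removes a point of `A` from `I`.
    exact hlow ((show insert x (A.erase y) ∩ I ⊆ A ∩ I by grind).ssubset_of_ne hin.symm)
  have hyI : y ∉ I := fun hyI => hout (by grind)
  exact ⟨x, mem_sdiff.2 ⟨hxI, hx⟩, y, mem_sdiff.2 ⟨hy, hyI⟩, rfl⟩

/-- The edges between two cylinders that exchange a point of `I` against a point outside `I`. -/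
def crossingEdges (X I : Finset α) (k : ℕ) (𝓖 𝓣 : Finset (Finset α)) : Finset (Sym2 (Finset α)) :=
  {q ∈ swapEdges (cylinder X I k 𝓖) (cylinder X I k 𝓣) |
    ¬(q.map (· ∩ I)).IsDiag ∧ ¬(q.map (· \ I)).IsDiag}

/-- The triples `(A, x, y)` such that exchanging `y` for `x` in the member `A` of the cylinder moves
a point from outside `I` into `I`. -/
def inwardSwaps (X I : Finset α) (k : ℕ) (𝓖 : Finset (Finset α)) :
    Finset (Σ _ : Finset α, α × α) :=
  (cylinder X I k 𝓖).sigma fun A => (I \ A) ×ˢ (A \ I)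

lemma card_inwardSwaps (hI : I ⊆ X) (he : e ≤ k) (h𝓖 : 𝓖 ⊆ I.powersetCard e) :
    #(inwardSwaps X I k 𝓖) = #𝓖 * #((X \ I).powersetCard (k - e)) * ((#I - e) * (k - e)) := by
  rw [inwardSwaps, card_sigma, ← card_cylinder hI he h𝓖]
  refine sum_const_nat fun A hA => ?_
  have htrace := card_inter_of_mem_cylinder h𝓖 hA
  rw [card_product, card_sdiff, card_sdiff, inter_comm I A, htrace, (mem_cylinder.1 hA).1.2]

lemma card_crossingEdges_le (hI : I ⊆ X) (he : e ≤ k) (h𝓖 : 𝓖 ⊆ I.powersetCard e)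
    (hlow : ∀ E ∈ 𝓖, ∀ H ∈ 𝓣, ¬H ⊂ E) :
    #(crossingEdges X I k 𝓖 𝓣) ≤
      #𝓖 * #((X \ I).powersetCard (k - e)) * ((#I - e) * (k - e)) := by
  rw [← card_inwardSwaps hI he h𝓖]
  refine (card_le_card (t := (inwardSwaps X I k 𝓖).image
    fun p => s(p.1, insert p.2.1 (p.1.erase p.2.2))) fun q hq => ?_).trans card_image_le
  obtain ⟨hq, hin, hout⟩ := mem_filter.1 hq
  obtain ⟨A, hA, B, hB, hswap, rfl⟩ := exists_of_mem_swapEdges hq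
  obtain ⟨x, hx, y, hy, rfl⟩ := exists_eq_of_oneSwap_of_inter_ne_of_sdiff_ne
    (hlow _ (mem_cylinder.1 hA).2 _ (mem_cylinder.1 hB).2) hswap hin hout
  exact mem_image.2 ⟨⟨A, x, y⟩, mem_sigma.2 ⟨hA, mem_product.2 ⟨hx, hy⟩⟩, rfl⟩

lemma injOn_mk_insert_erase (h𝓖 : 𝓖 ⊆ I.powersetCard e) :
    Set.InjOn (fun p : Σ _ : Finset α, α × α => s(p.1, insert p.2.1 (p.1.erase p.2.2)))
      (inwardSwaps X I k 𝓖) := by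
  rintro ⟨A, x, y⟩ hp ⟨B, z, w⟩ hr h
  simp only [inwardSwaps, mem_coe, mem_sigma, mem_product, mem_sdiff] at hp hr
  obtain ⟨hA, ⟨hxI, hxA⟩, hyA, hyI⟩ := hp
  obtain ⟨hB, ⟨-, hzB⟩, hwB, -⟩ := hr
  rcases Sym2.eq_iff.1 h with ⟨hAB, hswap⟩ | ⟨-, hAB⟩
  · obtain rfl : A = B := hAB
    replace hswap : insert x (A.erase y) = insert z (A.erase w) := hswap
    have hxz : ({x} : Finset α) = {z} := by
      rw [← insert_erase_sdiff hxA y, hswap, insert_erase_sdiff hzB w]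
    have hyw : ({y} : Finset α) = {w} := by
      rw [← sdiff_insert_erase hxA hyA, hswap, sdiff_insert_erase hzB hwB]
    rw [singleton_inj.1 hxz, singleton_inj.1 hyw]
  · replace hAB : insert x (A.erase y) = B := hAB
    have hcard : #(insert x (A.erase y) ∩ I) = #(A ∩ I) := by
      rw [hAB, card_inter_of_mem_cylinder h𝓖 hA, card_inter_of_mem_cylinder h𝓖 hB]
    rw [insert_erase_inter_of_mem_of_notMem hxI hyI, card_insert_of_notMem (by grind)] at hcard
    omega

lemma le_card_crossingEdges (hI : I ⊆ X) (he : e ≤ k) (h𝓖 : 𝓖 ⊆ I.powersetCard e)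
    (hup : ∀ E ∈ 𝓖, ∀ x ∈ I \ E, insert x E ∈ 𝓣) :
    #𝓖 * #((X \ I).powersetCard (k - e)) * ((#I - e) * (k - e)) ≤
      #(crossingEdges X I k 𝓖 𝓣) := by
  rw [← card_inwardSwaps hI he h𝓖]
  refine card_le_card_of_injOn _ ?_ (injOn_mk_insert_erase h𝓖)
  rintro ⟨A, x, y⟩ hp
  obtain ⟨hA, hxy⟩ := mem_sigma.1 hp
  obtain ⟨hx, hy⟩ := mem_product.1 hxy
  obtain ⟨⟨hAX, hAk⟩, htrace⟩ := mem_cylinder.1 hA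
  rw [mem_sdiff] at hx hy
  have hswap : OneSwap A (insert x (A.erase y)) := oneSwap_iff_exists.2 ⟨x, hx.2, y, hy.1, rfl⟩
  have hBI := insert_erase_inter_of_mem_of_notMem (A := A) hx.1 hy.2
  have hB : insert x (A.erase y) ∈ cylinder X I k 𝓣 := by
    refine mem_cylinder.2 ⟨⟨insert_subset (hI hx.1) ((erase_subset y A).trans hAX),
      hswap.card_eq ▸ hAk⟩, ?_⟩
    rw [hBI]
    exact hup _ htrace x (mem_sdiff.2 ⟨hx.1, fun h => hx.2 (mem_inter.1 h).1⟩)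
  have hin : A ∩ I ≠ insert x (A.erase y) ∩ I := by grind
  have hout : A \ I ≠ insert x (A.erase y) \ I := fun h => by
    have hyB : y ∈ insert x (A.erase y) \ I := h ▸ mem_sdiff.2 hy
    grind
  exact mem_filter.2 ⟨mk_mem_swapEdges.2 ⟨hswap, .inl ⟨hA, hB⟩⟩, hin, hout⟩

/-- The edges are classified by where the exchange takes place: outside `I`, inside `I`, or across
its boundary. -/
theorem card_swapEdges_cylinder (hI : I ⊆ X) (he : e ≤ k) (h𝓖 : 𝓖 ⊆ I.powersetCard e)
    (h𝓣 : 𝓣 ⊆ I.powerset) (h𝓖𝓣 : 𝓖 ⊆ 𝓣) :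
    #(swapEdges (cylinder X I k 𝓖) (cylinder X I k 𝓣)) =
      #𝓖 * #(swapEdges ((X \ I).powersetCard (k - e)) ((X \ I).powersetCard (k - e))) +
      #(swapEdges 𝓖 𝓣) * #((X \ I).powersetCard (k - e)) +
      #(crossingEdges X I k 𝓖 𝓣) := by
  have hsdiff_imp : ∀ q ∈ swapEdges (cylinder X I k 𝓖) (cylinder X I k 𝓣),
      ¬(q.map (· ∩ I)).IsDiag ∧ (q.map (· \ I)).IsDiag ↔ (q.map (· \ I)).IsDiag := by
    intro q hq
    obtain ⟨A, -, B, -, hswap, rfl⟩ := exists_of_mem_swapEdges hq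
    refine and_iff_right_of_imp fun hout hin => hswap.ne ?_
    rw [← inter_union_sdiff_self A I, ← inter_union_sdiff_self B I]
    exact congrArg₂ (· ∪ ·) hin hout
  rw [← card_filter_add_card_filter_not (fun q => (q.map (· ∩ I)).IsDiag),
    ← card_filter_add_card_filter_not (s := {q ∈ swapEdges _ _ | ¬(q.map (· ∩ I)).IsDiag})
      (fun q => (q.map (· \ I)).IsDiag),
    filter_filter, filter_filter, filter_congr hsdiff_imp,
    card_swapEdges_cylinder_of_inter_eq hI he h𝓖 h𝓖𝓣,
    card_swapEdges_cylinder_of_sdiff_eq hI he h𝓖 h𝓣, crossingEdges, add_assoc]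

end Cylinder

section Zeta

variable {k u v : ℕ} {F 𝓖 : Finset (Finset ℕ)}

lemma zeta_eq_card_swapEdges (hF : ∀ A ∈ F, #A = k) : zeta (k - 1) F = #(swapEdges F F) := by
  rw [← card_image_of_injective _ sym2_toFinset_injective, image_toFinset_swapEdges, zeta]
  congr 2
  ext ⟨A, B⟩
  simp only [mem_filter, mem_offDiag, mem_product]
  constructor
  · rintro ⟨⟨hA, hB, hne⟩, hcard⟩
    exact ⟨⟨hA, hB⟩, (oneSwap_iff_card_inter (hF A hA) (hF B hB)).2 ⟨hne, hcard⟩⟩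
  · rintro ⟨⟨hA, hB⟩, hswap⟩
    obtain ⟨hne, hcard⟩ := (oneSwap_iff_card_inter (hF A hA) (hF B hB)).1 hswap
    exact ⟨⟨hA, hB, hne⟩, hcard⟩

lemma zeta2v_eq_card_swapEdges (h𝓖 : ∀ E ∈ 𝓖, #E = u + 1 ∧ v ∈ E) (𝓗 : Finset (Finset ℕ)) :
    zeta2v u v 𝓖 𝓗 = #(swapEdges 𝓖 (𝓗.filter (v ∈ ·))) := by
  rw [← card_image_of_injective _ sym2_toFinset_injective, image_toFinset_swapEdges, zeta2v]
  congr 2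
  ext ⟨E, H⟩
  simp only [mem_filter, mem_product, mem_inter]
  constructor
  · rintro ⟨⟨hE, hH⟩, hEu, hHu, hcard, -, hvH⟩
    refine ⟨⟨hE, hH, hvH⟩, (oneSwap_iff_card_inter hEu hHu).2 ⟨?_, hcard⟩⟩
    rintro rfl
    rw [inter_self] at hcard
    omega
  · rintro ⟨⟨hE, hH, hvH⟩, hswap⟩
    obtain ⟨hEu, hvE⟩ := h𝓖 E hE
    have hHu := hswap.card_eq ▸ hEu
    exact ⟨⟨hE, hH⟩, hEu, hHu, ((oneSwap_iff_card_inter hEu hHu).1 hswap).2, hvE, hvH⟩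

end Zeta

section IntegerBinomial

variable {α : Type*} [DecidableEq α]

lemma ichoose_natCast (a b : ℕ) : ichoose a b = a.choose b := by
  unfold ichoose
  split_ifs with h
  · simp
  · rw [Nat.choose_eq_zero_of_lt (by omega), Nat.cast_zero]

lemma card_swapEdges_powersetCard (V : Finset α) (m : ℕ) :
    (#(swapEdges (V.powersetCard m) (V.powersetCard m)) : ℤ) =
      ichoose #V (m - 1) * ichoose (#V - m + 1) 2 := by
  rcases m with _ | m
  · simp [swapEdges, OneSwap, ichoose]
  rw [card_swapEdges_powersetCard_succ, Nat.cast_succ, add_sub_cancel_right, ichoose_natCast,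
    Nat.cast_mul]
  rcases le_or_gt m #V with hm | hm
  · rw [show (#V : ℤ) - (m + 1) + 1 = ((#V - m : ℕ) : ℤ) by push_cast [hm]; ring]
    exact congrArg _ (ichoose_natCast _ 2).symm
  · rw [Nat.choose_eq_zero_of_lt hm, Nat.cast_zero, zero_mul, zero_mul]

end IntegerBinomial

section Traces

variable {α : Type*} [DecidableEq α] {E I R X : Finset α} {e k : ℕ}
  {F 𝓢 𝓣 : Finset (Finset α)}

/-- The paper's `𝓕|_I`: the family of traces `A ∩ I` of the members `A` of `F`. -/
def traces (I : Finset α) (F : Finset (Finset α)) : Finset (Finset α) :=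
  F.image (· ∩ I)

lemma traces_subset_powerset : traces I F ⊆ I.powerset :=
  image_subset_iff.2 fun _ _ => mem_powerset.2 inter_subset_right

lemma exists_inter_eq_of_nonempty (hI : I ⊆ X) (he : e ≤ k) (hR : R ∈ I.powersetCard e)
    (hW : ((X \ I).powersetCard (k - e)).Nonempty) : ∃ A ∈ X.powersetCard k, A ∩ I = R := by
  obtain ⟨T, hT⟩ := hW
  have hmem := mem_cylinder.1 (union_mem_cylinder hI he hR (mem_singleton_self R) hT)
  exact ⟨R ∪ T, mem_powersetCard.2 hmem.1, mem_singleton.1 hmem.2⟩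

lemma cylinder_union : cylinder X I k (𝓢 ∪ 𝓣) = cylinder X I k 𝓢 ∪ cylinder X I k 𝓣 := by
  simp only [cylinder, mem_union, filter_or]

lemma cylinder_sdiff : cylinder X I k (𝓢 \ 𝓣) = cylinder X I k 𝓢 \ cylinder X I k 𝓣 := by
  ext A
  simp only [mem_cylinder, mem_sdiff]
  tauto

lemma cylinder_eq_empty (hI : I ⊆ X) (he : e ≤ k) (h𝓢 : 𝓢 ⊆ I.powersetCard e)
    (hW : (X \ I).powersetCard (k - e) = ∅) : cylinder X I k 𝓢 = ∅ := by
  rw [← card_eq_zero, card_cylinder hI he h𝓢, hW, card_empty, mul_zero]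

lemma swapEdges_empty_left (𝓗 : Finset (Finset α)) : swapEdges ∅ 𝓗 = ∅ := by
  rw [swapEdges, empty_product, filter_empty, image_empty]

end Traces

section GeneratingSet

variable {n k s e : ℕ} {F g : Finset (Finset ℕ)} {A B E R : Finset ℕ} {x : ℕ}

lemma LeftCompressed.insert_erase_mem (hLC : LeftCompressed n F) (hB : B ∈ F) (hx : 1 ≤ x)
    (hxs : x < s) (hsn : s ≤ n) (hsB : s ∈ B) (hxB : x ∉ B) : insert x (B.erase s) ∈ F := by
  by_contra hnot
  have hshift := mem_image_of_mem (shiftSet x s F) hB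
  rw [shiftSet, if_pos ⟨hsB, hxB, hnot⟩] at hshift
  exact hnot ((hLC x s hx hxs hsn).subset hshift)

lemma IsGenSet.mem_iff (hgen : IsGenSet n k F g) :
    A ∈ F ↔ A ∈ KSets n k ∧ ∃ E ∈ g, E ⊆ A := by
  rw [← hgen.2, mem_filter]

lemma IsGenSet.sPlus_le (hgen : IsGenSet n k F g) : sPlus g ≤ n :=
  Finset.sup_le fun E hE => Finset.sup_le fun _ hx => (mem_Icc.1 ((hgen.1 E hE).1 hx)).2

lemma IsGenSet.subset_Iv_sPlus (hgen : IsGenSet n k F g) (hE : E ∈ g) : E ⊆ Iv (sPlus g) :=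
  fun _ hx => mem_Icc.2 ⟨(mem_Icc.1 ((hgen.1 E hE).1 hx)).1,
    (le_sup (f := id) hx).trans (le_sup (f := fun E : Finset ℕ => E.sup id) hE)⟩

/-- If `A` misses `s`, then replacing `x` by `s` in `A` produces a member of `F` containing `E`,
and compression carries it back to `A`. -/
lemma IsGenSet.mem_of_insert_erase_subset (hgen : IsGenSet n k F g) (hLC : LeftCompressed n F)
    (hE : E ∈ g) (hsE : s ∈ E) (hx : x ∈ Iv s \ E.erase s) (hA : A ∈ KSets n k)
    (hsub : insert x (E.erase s) ⊆ A) : A ∈ F := by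
  have hsn := mem_Icc.1 ((hgen.1 E hE).1 hsE)
  obtain ⟨hxA, hEA⟩ := insert_subset_iff.1 hsub
  by_cases hsA : s ∈ A
  · exact hgen.mem_iff.2 ⟨hA, E, hE, by rw [← insert_erase hsE]; exact insert_subset hsA hEA⟩
  have hxs : x ≠ s := fun h => hsA (h ▸ hxA)
  have hx1 := mem_Icc.1 (mem_sdiff.1 hx).1
  have hxE := (mem_sdiff.1 hx).2
  have hswap : OneSwap A (insert s (A.erase x)) := oneSwap_iff_exists.2 ⟨s, hsA, x, hxA, rfl⟩
  obtain ⟨hAn, hAk⟩ := mem_powersetCard.1 hA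
  have hB : insert s (A.erase x) ∈ F := by
    refine hgen.mem_iff.2 ⟨mem_powersetCard.2 ⟨insert_subset (mem_Icc.2 hsn)
      ((erase_subset x A).trans hAn), hswap.card_eq ▸ hAk⟩, E, hE, ?_⟩
    rw [← insert_erase hsE]
    exact insert_subset_insert s (subset_erase.2 ⟨hEA, hxE⟩)
  have hcompressed := hLC.insert_erase_mem hB hx1.1 (lt_of_le_of_ne hx1.2 hxs) hsn.2
    (mem_insert_self s _) (by grind)
  rwa [erase_insert (by grind), insert_erase hxA] at hcompressed

lemma IsGenSet.exists_subset_of_mem_traces (hgen : IsGenSet n k F g)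
    (hgs : ∀ E ∈ g, E ⊆ Iv s) (hR : R ∈ traces (Iv s) F) : ∃ E ∈ g, E ⊆ R := by
  obtain ⟨A, hA, rfl⟩ := mem_image.1 hR
  obtain ⟨-, E, hE, hEA⟩ := hgen.mem_iff.1 hA
  exact ⟨E, hE, subset_inter hEA (hgs E hE)⟩

lemma IsGenSet.eq_cylinder_traces (hgen : IsGenSet n k F g) (hgs : ∀ E ∈ g, E ⊆ Iv s) :
    F = cylinder (Iv n) (Iv s) k (traces (Iv s) F) := by
  ext A
  rw [cylinder, mem_filter]
  refine ⟨fun hA => ⟨(hgen.mem_iff.1 hA).1, mem_image_of_mem _ hA⟩, fun ⟨hA, htrace⟩ => ?_⟩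
  obtain ⟨E, hE, hEA⟩ := hgen.exists_subset_of_mem_traces hgs htrace
  exact hgen.mem_iff.2 ⟨hA, E, hE, hEA.trans inter_subset_left⟩

lemma Iv_subset_Iv (hsn : s ≤ n) : Iv s ⊆ Iv n :=
  Icc_subset_Icc_right hsn

lemma IsGenSet.mem_traces_of_subset (hgen : IsGenSet n k F g) (hsn : s ≤ n) (he : e ≤ k)
    (hW : ((Iv n \ Iv s).powersetCard (k - e)).Nonempty) (hR : R ∈ (Iv s).powersetCard e)
    (hE : E ∈ g) (hER : E ⊆ R) : R ∈ traces (Iv s) F := by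
  obtain ⟨A, hA, rfl⟩ := exists_inter_eq_of_nonempty (Iv_subset_Iv hsn) he hR hW
  exact mem_image_of_mem _ (hgen.mem_iff.2 ⟨hA, E, hE, hER.trans inter_subset_left⟩)

lemma IsGenSet.mem_traces_of_insert_erase_subset (hgen : IsGenSet n k F g)
    (hLC : LeftCompressed n F) (hsn : s ≤ n) (he : e ≤ k)
    (hW : ((Iv n \ Iv s).powersetCard (k - e)).Nonempty) (hR : R ∈ (Iv s).powersetCard e)
    (hE : E ∈ g) (hsE : s ∈ E) (hx : x ∈ Iv s \ E.erase s) (hsub : insert x (E.erase s) ⊆ R) :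
    R ∈ traces (Iv s) F := by
  obtain ⟨A, hA, rfl⟩ := exists_inter_eq_of_nonempty (Iv_subset_Iv hsn) he hR hW
  exact mem_image_of_mem _
    (hgen.mem_of_insert_erase_subset hLC hE hsE hx hA (hsub.trans inter_subset_left))

lemma IsGenSet.not_ssubset_of_mem_traces (hgen : IsGenSet n k F g) (hgs : ∀ E ∈ g, E ⊆ Iv s)
    (hanti : ∀ E₁ ∈ g, ∀ E₂ ∈ g, E₁ ⊆ E₂ → E₁ = E₂) (hE : E ∈ g) (hR : R ∈ traces (Iv s) F) :
    ¬R ⊂ E := by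
  intro hRE
  obtain ⟨E', hE', hE'R⟩ := hgen.exists_subset_of_mem_traces hgs hR
  have hE'E := hE'R.trans_ssubset hRE
  exact hE'E.ne (hanti E' hE' E hE hE'E.subset)

/-- The paper's `g*_i'`: the sets whose cylinder over `[s]` is added to `𝓕`. -/
def gStarErase (g : Finset (Finset ℕ)) (s i : ℕ) : Finset (Finset ℕ) :=
  (gStar g s i).image fun E => E.erase s

lemma mem_gStar {i : ℕ} : E ∈ gStar g s i ↔ E ∈ g ∧ s ∈ E ∧ #E = i :=
  mem_filter

lemma gStar_subset_powersetCard (hgs : ∀ E ∈ g, E ⊆ Iv s) (i : ℕ) :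
    gStar g s i ⊆ (Iv s).powersetCard i := fun E hE =>
  have ⟨hEg, _, hEi⟩ := mem_gStar.1 hE
  mem_powersetCard.2 ⟨hgs E hEg, hEi⟩

lemma gStarErase_subset_powersetCard (hgs : ∀ E ∈ g, E ⊆ Iv s) (i : ℕ) :
    gStarErase g s (i + 1) ⊆ (Iv s).powersetCard i := by
  refine image_subset_iff.2 fun E hE => ?_
  obtain ⟨hEg, hsE, hEi⟩ := mem_gStar.1 hE
  exact mem_powersetCard.2 ⟨(erase_subset s E).trans (hgs E hEg),
    by rw [card_erase_of_mem hsE, hEi, Nat.add_sub_cancel]⟩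

lemma card_gStarErase (g : Finset (Finset ℕ)) (s i : ℕ) : #(gStarErase g s i) = #(gStar g s i) :=
  card_image_of_injOn ((erase_injOn' s).mono fun _ hE => (mem_gStar.1 hE).2.1)

lemma disjoint_gStarErase_gStar (g : Finset (Finset ℕ)) (s i j : ℕ) :
    Disjoint (gStarErase g s i) (gStar g s j) := by
  refine disjoint_left.2 fun R hR hRj => ?_
  obtain ⟨E, -, rfl⟩ := mem_image.1 hR
  exact notMem_erase s E (mem_gStar.1 hRj).2.1

lemma IsGenSet.disjoint_gStarErase_traces (hgen : IsGenSet n k F g) (hgs : ∀ E ∈ g, E ⊆ Iv s)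
    (hanti : ∀ E₁ ∈ g, ∀ E₂ ∈ g, E₁ ⊆ E₂ → E₁ = E₂) (i : ℕ) :
    Disjoint (gStarErase g s i) (traces (Iv s) F) := by
  refine disjoint_left.2 fun R hR hRF => ?_
  obtain ⟨E, hE, rfl⟩ := mem_image.1 hR
  obtain ⟨hEg, hsE, -⟩ := mem_gStar.1 hE
  exact hgen.not_ssubset_of_mem_traces hgs hanti hEg hRF (erase_ssubset hsE)

lemma Dcal_gStar (hgs : ∀ E ∈ g, E ⊆ Iv s) (n k j : ℕ) :
    Dcal n k (gStar g s j) = cylinder (Iv n) (Iv s) k (gStar g s j) := by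
  have hsup : ∀ E ∈ gStar g s j, E.sup id = s := fun E hE =>
    have ⟨hEg, hsE, _⟩ := mem_gStar.1 hE
    le_antisymm (Finset.sup_le fun _ hx => (mem_Icc.1 (hgs E hEg hx)).2) (le_sup (f := id) hsE)
  refine filter_congr fun B _ => ⟨?_, fun hB => ⟨_, hB, by rw [hsup _ hB]⟩⟩
  rintro ⟨E, hE, hBE⟩
  rw [hsup E hE] at hBE
  rwa [hBE]

/-- The two families added to `F` may differ, since `E \ {s}` has a smaller maximum than `s`, but
only in sets that already belong to `F`. -/
lemma IsGenSet.union_Dcal_gStarErase (hgen : IsGenSet n k F g) (hLC : LeftCompressed n F)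
    (hgs : ∀ E ∈ g, E ⊆ Iv s) (i : ℕ) :
    F ∪ Dcal n k (gStarErase g s i) = F ∪ cylinder (Iv n) (Iv s) k (gStarErase g s i) := by
  refine Subset.antisymm (union_subset subset_union_left fun B hB => ?_)
    (union_subset_union_right fun B hB => ?_)
  · obtain ⟨hBn, R, hR, hBR⟩ := mem_filter.1 hB
    by_cases htrace : B ∩ Iv s ∈ gStarErase g s i
    · exact mem_union_right _ (mem_filter.2 ⟨hBn, htrace⟩)
    obtain ⟨E, hE, rfl⟩ := mem_image.1 hR
    obtain ⟨hEg, hsE, -⟩ := mem_gStar.1 hE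
    have hEB : E.erase s ⊆ B := hBR.symm.subset.trans inter_subset_left
    have hsub : E.erase s ⊂ B ∩ Iv s :=
      (subset_inter hEB ((erase_subset s E).trans (hgs E hEg))).ssubset_of_ne
        fun h => htrace (h ▸ hR)
    obtain ⟨x, hx, hxE⟩ := exists_of_ssubset hsub
    obtain ⟨hxB, hxs⟩ := mem_inter.1 hx
    exact mem_union_left _ (hgen.mem_of_insert_erase_subset hLC hEg hsE
      (mem_sdiff.2 ⟨hxs, hxE⟩) hBn (insert_subset hxB hEB))
  · obtain ⟨hBn, hR⟩ := mem_filter.1 hB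
    refine mem_filter.2 ⟨hBn, _, hR, ?_⟩
    have hsup : Iv ((B ∩ Iv s).sup id) ⊆ Iv s :=
      Iv_subset_Iv (Finset.sup_le fun _ hx => (mem_Icc.1 (mem_inter.1 hx).2).2)
    exact (inter_subset_inter_left hsup).antisymm fun x hx => mem_inter.2
      ⟨(mem_inter.1 hx).1, mem_Icc.2 ⟨(mem_Icc.1 (mem_inter.1 hx).2).1, le_sup (f := id) hx⟩⟩

/-- The traces of the modified family `𝓕₁` on `[s]`. -/
def surgeryTraces (F g : Finset (Finset ℕ)) (s i j : ℕ) : Finset (Finset ℕ) :=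
  (traces (Iv s) F ∪ gStarErase g s i) \ gStar g s j

lemma IsGenSet.surgery_eq_cylinder (hgen : IsGenSet n k F g) (hLC : LeftCompressed n F)
    (hgs : ∀ E ∈ g, E ⊆ Iv s) (i j : ℕ) :
    (F ∪ Dcal n k (gStarErase g s i)) \ Dcal n k (gStar g s j) =
      cylinder (Iv n) (Iv s) k (surgeryTraces F g s i j) := by
  rw [hgen.union_Dcal_gStarErase hLC hgs, Dcal_gStar hgs, surgeryTraces, cylinder_sdiff,
    cylinder_union, ← hgen.eq_cylinder_traces hgs]

lemma IsGenSet.cylinder_surgeryTraces_sdiff (hgen : IsGenSet n k F g)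
    (hgs : ∀ E ∈ g, E ⊆ Iv s) (hanti : ∀ E₁ ∈ g, ∀ E₂ ∈ g, E₁ ⊆ E₂ → E₁ = E₂) (i j : ℕ) :
    cylinder (Iv n) (Iv s) k (surgeryTraces F g s i j) \ F =
      cylinder (Iv n) (Iv s) k (gStarErase g s i) := by
  nth_rw 2 [hgen.eq_cylinder_traces hgs]
  rw [← cylinder_sdiff, surgeryTraces, sdiff_right_comm, union_sdiff_left,
    sdiff_eq_self_of_disjoint (hgen.disjoint_gStarErase_traces hgs hanti i),
    sdiff_eq_self_of_disjoint (disjoint_gStarErase_gStar g s i j)]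

lemma IsGenSet.cylinder_gStar_subset (hgen : IsGenSet n k F g) (j : ℕ) :
    cylinder (Iv n) (Iv s) k (gStar g s j) ⊆ F := fun _ hA =>
  have ⟨hAn, htrace⟩ := mem_filter.1 hA
  hgen.mem_iff.2 ⟨hAn, _, (mem_gStar.1 htrace).1, inter_subset_left⟩

lemma IsGenSet.sdiff_cylinder_surgeryTraces (hgen : IsGenSet n k F g)
    (hgs : ∀ E ∈ g, E ⊆ Iv s) (i j : ℕ) :
    F \ cylinder (Iv n) (Iv s) k (surgeryTraces F g s i j) =
      cylinder (Iv n) (Iv s) k (gStar g s j) := by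
  rw [surgeryTraces, cylinder_sdiff, cylinder_union, ← hgen.eq_cylinder_traces hgs]
  have := hgen.cylinder_gStar_subset (s := s) j
  ext A
  grind

lemma card_Iv (s : ℕ) : #(Iv s) = s := by
  rw [Iv, Nat.card_Icc, Nat.add_sub_cancel]

lemma card_Iv_sdiff (hsn : s ≤ n) : (#(Iv n \ Iv s) : ℤ) = n - s := by
  rw [card_sdiff_of_subset (Iv_subset_Iv hsn), card_Iv, card_Iv, Nat.cast_sub hsn]

lemma card_powersetCard_Iv_sdiff (hsn : s ≤ n) (m : ℕ) :
    (#((Iv n \ Iv s).powersetCard m) : ℤ) = ichoose (n - s) m := by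
  rw [card_powersetCard, ← ichoose_natCast, card_Iv_sdiff hsn]

lemma card_swapEdges_powersetCard_Iv_sdiff (hsn : s ≤ n) (m : ℕ) :
    (#(swapEdges ((Iv n \ Iv s).powersetCard m) ((Iv n \ Iv s).powersetCard m)) : ℤ) =
      ichoose (n - s) (m - 1) * ichoose (n - s - m + 1) 2 := by
  rw [card_swapEdges_powersetCard, card_Iv_sdiff hsn]

lemma IsGenSet.card_swapEdges_cylinder_gStar_le_nat (hgen : IsGenSet n k F g)
    (hgs : ∀ E ∈ g, E ⊆ Iv s) (hanti : ∀ E₁ ∈ g, ∀ E₂ ∈ g, E₁ ⊆ E₂ → E₁ = E₂) (hsn : s ≤ n)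
    (he : e ≤ k) :
    #(swapEdges (cylinder (Iv n) (Iv s) k (gStar g s e)) F) ≤
      #(gStar g s e) * #(swapEdges ((Iv n \ Iv s).powersetCard (k - e))
        ((Iv n \ Iv s).powersetCard (k - e))) +
      #(swapEdges (gStar g s e) ((traces (Iv s) F).filter (s ∈ ·))) *
        #((Iv n \ Iv s).powersetCard (k - e)) +
      #(gStar g s e) * (s - e) * (k - e + 1) * #((Iv n \ Iv s).powersetCard (k - e)) := by
  have h𝓖 := gStar_subset_powersetCard hgs e
  obtain hW | hW := ((Iv n \ Iv s).powersetCard (k - e)).eq_empty_or_nonempty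
  · rw [cylinder_eq_empty (Iv_subset_Iv hsn) he h𝓖 hW, swapEdges_empty_left, card_empty]
    exact Nat.zero_le _
  have hmem : ∀ E ∈ gStar g s e, E ∈ traces (Iv s) F := fun E hE =>
    hgen.mem_traces_of_subset hsn he hW (h𝓖 hE) (mem_gStar.1 hE).1 subset_rfl
  have hcount := card_swapEdges_cylinder (Iv_subset_Iv hsn) he h𝓖 traces_subset_powerset hmem
  have hcrossing := card_crossingEdges_le (Iv_subset_Iv hsn) he h𝓖 fun E hE H hH =>
    hgen.not_ssubset_of_mem_traces hgs hanti (mem_gStar.1 hE).1 hH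
  have hinside := card_swapEdges_le_add_card_mul h𝓖 (fun E hE => (mem_gStar.1 hE).2.1)
    (traces_subset_powerset (F := F))
  rw [← hgen.eq_cylinder_traces hgs] at hcount
  rw [card_Iv] at hcrossing hinside
  linarith [Nat.mul_le_mul_right #((Iv n \ Iv s).powersetCard (k - e)) hinside]

theorem IsGenSet.card_swapEdges_cylinder_gStar_le (hgen : IsGenSet n k F g)
    (hgs : ∀ E ∈ g, E ⊆ Iv s) (hanti : ∀ E₁ ∈ g, ∀ E₂ ∈ g, E₁ ⊆ E₂ → E₁ = E₂) (hsn : s ≤ n)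
    (j : ℕ) :
    (#(swapEdges (cylinder (Iv n) (Iv s) k (gStar g s j)) F) : ℤ) ≤
      #(gStar g s j) * ichoose (n - s) (k - j - 1) * ichoose (n - s - k + j + 1) 2 +
      zeta2v (j - 1) s (gStar g s j) (traces (Iv s) F) * ichoose (n - s) (k - j) +
      #(gStar g s j) * (s - j) * (k - j + 1) * ichoose (n - s) (k - j) := by
  obtain h0 | ⟨E, hE⟩ := (gStar g s j).eq_empty_or_nonempty
  · simp [h0, cylinder, zeta2v, swapEdges_empty_left]
  obtain ⟨hEg, hsE, hEj⟩ := mem_gStar.1 hE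
  have hjk : j ≤ k := hEj ▸ (hgen.1 E hEg).2
  have hjs : j ≤ s := hEj ▸ card_Iv s ▸ card_le_card (hgs E hEg)
  have hj : j - 1 + 1 = j := Nat.sub_add_cancel (hEj ▸ card_pos.2 ⟨s, hsE⟩)
  have hle := hgen.card_swapEdges_cylinder_gStar_le_nat hgs hanti hsn hjk
  have hzeta := zeta2v_eq_card_swapEdges (u := j - 1) (v := s) (𝓖 := gStar g s j)
    (fun E hE => ⟨by rw [hj, (mem_gStar.1 hE).2.2], (mem_gStar.1 hE).2.1⟩) (traces (Iv s) F)
  rw [← hzeta] at hle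
  zify [hjk, hjs] at hle
  rw [card_swapEdges_powersetCard_Iv_sdiff hsn, card_powersetCard_Iv_sdiff hsn,
    Nat.cast_sub hjk, show (n : ℤ) - s - (k - j) + 1 = n - s - k + j + 1 by ring] at hle
  linarith

/-- `H` contains a generator `D`, and `H \ {s}` is again a trace unless `s ∈ D`. If `D = H`, then
`H \ {s}` is one of the added traces; otherwise some `x ∈ H \ D` can replace `s` in `D`. -/
lemma IsGenSet.erase_mem_surgeryTraces (hgen : IsGenSet n k F g) (hLC : LeftCompressed n F)
    (hgs : ∀ E ∈ g, E ⊆ Iv s) (hsn : s ≤ n) (he : e ≤ k)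
    (hW : ((Iv n \ Iv s).powersetCard (k - e)).Nonempty) {H : Finset ℕ} (j : ℕ)
    (hH : H ∈ traces (Iv s) F) (hsH : s ∈ H) (hHe : #H = e + 1) :
    H.erase s ∈ surgeryTraces F g s (e + 1) j := by
  refine mem_sdiff.2 ⟨?_, fun h => notMem_erase s H (mem_gStar.1 h).2.1⟩
  have hHs := mem_powerset.1 (traces_subset_powerset hH)
  have hR : H.erase s ∈ (Iv s).powersetCard e := mem_powersetCard.2
    ⟨(erase_subset s H).trans hHs, by rw [card_erase_of_mem hsH, hHe, Nat.add_sub_cancel]⟩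
  obtain ⟨D, hD, hDH⟩ := hgen.exists_subset_of_mem_traces hgs hH
  by_cases hsD : s ∈ D
  · obtain rfl | hne := eq_or_ne D H
    · exact mem_union_right _ (mem_image_of_mem _ (mem_gStar.2 ⟨hD, hsD, hHe⟩))
    obtain ⟨x, hxH, hxD⟩ := exists_of_ssubset (hDH.ssubset_of_ne hne)
    have hxs : x ≠ s := fun h => hxD (h ▸ hsD)
    exact mem_union_left _ (hgen.mem_traces_of_insert_erase_subset hLC hsn he hW hR hD hsD
      (mem_sdiff.2 ⟨hHs hxH, fun h => hxD (mem_of_mem_erase h)⟩)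
      (insert_subset (mem_erase.2 ⟨hxs, hxH⟩) (erase_subset_erase s hDH)))
  · exact mem_union_left _ (hgen.mem_traces_of_subset hsn he hW hR hD
      (subset_erase.2 ⟨hDH, hsD⟩))

lemma IsGenSet.insert_mem_surgeryTraces (hgen : IsGenSet n k F g) (hLC : LeftCompressed n F)
    (hgs : ∀ E ∈ g, E ⊆ Iv s) (hsn : s ≤ n) (he : e + 1 ≤ k)
    (hW : ((Iv n \ Iv s).powersetCard (k - (e + 1))).Nonempty) {j : ℕ} (hj : j ≠ e + 1)
    (hR : R ∈ gStarErase g s (e + 1)) (hx : x ∈ Iv s \ R) :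
    insert x R ∈ surgeryTraces F g s (e + 1) j := by
  obtain ⟨hxs, hxR⟩ := mem_sdiff.1 hx
  obtain ⟨hRs, hRe⟩ := mem_powersetCard.1 (gStarErase_subset_powersetCard hgs e hR)
  have hcard : #(insert x R) = e + 1 := by rw [card_insert_of_notMem hxR, hRe]
  refine mem_sdiff.2 ⟨mem_union_left _ ?_, fun h => hj ?_⟩
  · obtain ⟨E, hE, rfl⟩ := mem_image.1 hR
    exact hgen.mem_traces_of_insert_erase_subset hLC hsn he hW
      (mem_powersetCard.2 ⟨insert_subset hxs hRs, hcard⟩) (mem_gStar.1 hE).1 (mem_gStar.1 hE).2.1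
      hx subset_rfl
  · rw [← (mem_gStar.1 h).2.2, hcard]

lemma surgeryTraces_subset_powerset (hgs : ∀ E ∈ g, E ⊆ Iv s) (j : ℕ) :
    surgeryTraces F g s (e + 1) j ⊆ (Iv s).powerset :=
  sdiff_subset.trans (union_subset traces_subset_powerset fun _ hR =>
    mem_powerset.2 (mem_powersetCard.1 (gStarErase_subset_powersetCard hgs e hR)).1)

lemma gStarErase_subset_surgeryTraces (F g : Finset (Finset ℕ)) (s i j : ℕ) :
    gStarErase g s i ⊆ surgeryTraces F g s i j :=
  subset_sdiff.2 ⟨subset_union_right, disjoint_gStarErase_gStar g s i j⟩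

lemma IsGenSet.le_card_swapEdges_cylinder_gStarErase_nat (hgen : IsGenSet n k F g)
    (hLC : LeftCompressed n F) (hgs : ∀ E ∈ g, E ⊆ Iv s) (hsn : s ≤ n) (he : e + 1 ≤ k) {j : ℕ}
    (hj : j ≠ e + 1) :
    #(gStar g s (e + 1)) * #(swapEdges ((Iv n \ Iv s).powersetCard (k - e))
        ((Iv n \ Iv s).powersetCard (k - e))) +
      #(swapEdges (gStar g s (e + 1)) ((traces (Iv s) F).filter (s ∈ ·))) *
        #((Iv n \ Iv s).powersetCard (k - e)) +
      #(gStar g s (e + 1)) * (s - e) * (k - e) * #((Iv n \ Iv s).powersetCard (k - e)) ≤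
    #(swapEdges (cylinder (Iv n) (Iv s) k (gStarErase g s (e + 1)))
      (cylinder (Iv n) (Iv s) k (surgeryTraces F g s (e + 1) j))) := by
  obtain hW | hW := ((Iv n \ Iv s).powersetCard (k - e)).eq_empty_or_nonempty
  · simp [hW, swapEdges_empty_left]
  have hek : e ≤ k := Nat.le_of_succ_le he
  have h𝓖 := gStarErase_subset_powersetCard hgs e
  have hW' : ((Iv n \ Iv s).powersetCard (k - (e + 1))).Nonempty :=
    powersetCard_nonempty.2 (le_trans (by omega) (powersetCard_nonempty.1 hW))
  have hcount := card_swapEdges_cylinder (Iv_subset_Iv hsn) hek h𝓖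
    (surgeryTraces_subset_powerset (F := F) hgs j) (gStarErase_subset_surgeryTraces F g s _ j)
  have hcrossing := le_card_crossingEdges (Iv_subset_Iv hsn) hek h𝓖 fun R hR x hx =>
    hgen.insert_mem_surgeryTraces hLC hgs hsn he hW' hj hR hx
  have hinside : #(swapEdges (gStar g s (e + 1)) ((traces (Iv s) F).filter (s ∈ ·))) ≤
      #(swapEdges (gStarErase g s (e + 1)) (surgeryTraces F g s (e + 1) j)) :=
    card_swapEdges_le_card_swapEdges_image_erase (fun E hE => (mem_gStar.1 hE).2.1)
      (fun H hH => (mem_filter.1 hH).2) fun E hE H hH hswap =>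
        hgen.erase_mem_surgeryTraces hLC hgs hsn hek hW j (mem_filter.1 hH).1 (mem_filter.1 hH).2
          (hswap.card_eq ▸ (mem_gStar.1 hE).2.2)
  rw [card_gStarErase] at hcount hcrossing
  rw [card_Iv] at hcrossing
  linarith [Nat.mul_le_mul_right #((Iv n \ Iv s).powersetCard (k - e)) hinside]

theorem IsGenSet.le_card_swapEdges_cylinder_gStarErase (hgen : IsGenSet n k F g)
    (hLC : LeftCompressed n F) (hgs : ∀ E ∈ g, E ⊆ Iv s) (hsn : s ≤ n) {i j : ℕ} (hij : j ≠ i) :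
    #(gStar g s i) * ichoose (n - s) (k - i) * ichoose (n - s - k + i) 2 +
      zeta2v (i - 1) s (gStar g s i) (traces (Iv s) F) * ichoose (n - s) (k - i + 1) +
      #(gStar g s i) * (s - i + 1) * (k - i + 1) * ichoose (n - s) (k - i + 1) ≤
    (#(swapEdges (cylinder (Iv n) (Iv s) k (gStarErase g s i))
      (cylinder (Iv n) (Iv s) k (surgeryTraces F g s i j))) : ℤ) := by
  obtain h0 | ⟨E, hE⟩ := (gStar g s i).eq_empty_or_nonempty
  · simp [h0, zeta2v]
  obtain ⟨hEg, hsE, hEi⟩ := mem_gStar.1 hE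
  obtain ⟨e, rfl⟩ := Nat.exists_eq_add_one.2 (hEi ▸ card_pos.2 ⟨s, hsE⟩)
  have hek : e + 1 ≤ k := hEi ▸ (hgen.1 E hEg).2
  have hes : e + 1 ≤ s := hEi ▸ card_Iv s ▸ card_le_card (hgs E hEg)
  have hle := hgen.le_card_swapEdges_cylinder_gStarErase_nat hLC hgs hsn hek hij
  rw [← zeta2v_eq_card_swapEdges (u := e) fun E hE =>
    ⟨(mem_gStar.1 hE).2.2, (mem_gStar.1 hE).2.1⟩] at hle
  zify [Nat.le_of_succ_le hek, Nat.le_of_succ_le hes] at hle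
  rw [card_swapEdges_powersetCard_Iv_sdiff hsn, card_powersetCard_Iv_sdiff hsn,
    Nat.cast_sub (Nat.le_of_succ_le hek)] at hle
  rw [Nat.add_sub_cancel, Nat.cast_succ, show (k : ℤ) - (e + 1) + 1 = k - e by ring,
    show (k : ℤ) - (e + 1) = k - e - 1 by ring,
    show (n : ℤ) - s - k + (e + 1) = n - s - (k - e) + 1 by ring]
  linarith

end GeneratingSet

theorem stmt_7_general (n k i j s : ℕ) (F g : Finset (Finset ℕ)) (hLC : LeftCompressed n F)
    (hgen : IsGenSet n k F g)
    (hanti : ∀ E₁ ∈ g, ∀ E₂ ∈ g, E₁ ⊆ E₂ → E₁ = E₂)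
    (hs : s = sPlus g) (hij : j ≠ i) (F₁ : Finset (Finset ℕ))
    (hF₁ : F₁ = (F ∪ Dcal n k ((gStar g s i).image fun E => E.erase s)) \
        Dcal n k (gStar g s j)) :
    ((gStar g s i).card : ℤ) * ichoose ((n : ℤ) - s) ((k : ℤ) - i) *
        ichoose ((n : ℤ) - s - k + i) 2
      + (zeta2v (i - 1) s (gStar g s i) (F.image fun A => A ∩ Iv s) : ℤ) *
        ichoose ((n : ℤ) - s) ((k : ℤ) - i + 1)
      + ((gStar g s i).card : ℤ) * ((s : ℤ) - i + 1) * ((k : ℤ) - i + 1) *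
        ichoose ((n : ℤ) - s) ((k : ℤ) - i + 1)
      - ((gStar g s j).card : ℤ) * ichoose ((n : ℤ) - s) ((k : ℤ) - j - 1) *
        ichoose ((n : ℤ) - s - k + j + 1) 2
      - (zeta2v (j - 1) s (gStar g s j) (F.image fun A => A ∩ Iv s) : ℤ) *
        ichoose ((n : ℤ) - s) ((k : ℤ) - j)
      - ((gStar g s j).card : ℤ) * ((s : ℤ) - j) * ((k : ℤ) - j + 1) *
        ichoose ((n : ℤ) - s) ((k : ℤ) - j)
      ≤ (zeta (k - 1) F₁ : ℤ) - (zeta (k - 1) F : ℤ) := by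
  have hsn : s ≤ n := hs ▸ hgen.sPlus_le
  have hgs : ∀ E ∈ g, E ⊆ Iv s := fun E hE => hs ▸ hgen.subset_Iv_sPlus hE
  replace hF₁ : F₁ = cylinder (Iv n) (Iv s) k (surgeryTraces F g s i j) :=
    hF₁.trans (hgen.surgery_eq_cylinder hLC hgs i j)
  have hlower := hgen.le_card_swapEdges_cylinder_gStarErase hLC hgs hsn hij
  have hupper := hgen.card_swapEdges_cylinder_gStar_le hgs hanti hsn j
  have hFk : ∀ A ∈ F, #A = k := fun A hA => (mem_powersetCard.1 (hgen.mem_iff.1 hA).1).2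
  have hF₁k : ∀ A ∈ F₁, #A = k := fun A hA => (mem_cylinder.1 (hF₁ ▸ hA)).1.2
  rw [zeta_eq_card_swapEdges hFk, zeta_eq_card_swapEdges hF₁k, card_swapEdges_self_sub, hF₁,
    hgen.cylinder_surgeryTraces_sdiff hgs hanti, hgen.sdiff_cylinder_surgeryTraces hgs]
  simp only [traces] at hlower hupper
  linarith

/-- **Key counting lemma for the generating set method (Lemma 3.2).** -/
theorem stmt_7 (n k t i j s : ℕ) (ht : 0 < t) (hk : 0 < k) (hkn : k ≤ n)
    (F g : Finset (Finset ℕ)) (hF : F ⊆ KSets n k)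
    (hint : IntersectingT t F) (hLC : LeftCompressed n F)
    (hgen : IsGenSet n k F g)
    (hanti : ∀ E₁ ∈ g, ∀ E₂ ∈ g, E₁ ⊆ E₂ → E₁ = E₂)
    (hs : s = sPlus g)
    (hsmin : ∀ g' : Finset (Finset ℕ), IsGenSet n k F g' → s ≤ sPlus g')
    (hne : (gStar g s i).Nonempty)
    (hj : (j : ℤ) = (s : ℤ) + t - i) (hij : j ≠ i)
    (F₁ : Finset (Finset ℕ))
    (hF₁ : F₁ = (F ∪ Dcal n k ((gStar g s i).image fun E => E.erase s)) \
        Dcal n k (gStar g s j)) :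
    ((gStar g s i).card : ℤ) * ichoose ((n : ℤ) - s) ((k : ℤ) - i) *
        ichoose ((n : ℤ) - s - k + i) 2
      + (zeta2v (i - 1) s (gStar g s i) (F.image fun A => A ∩ Iv s) : ℤ) *
        ichoose ((n : ℤ) - s) ((k : ℤ) - i + 1)
      + ((gStar g s i).card : ℤ) * ((s : ℤ) - i + 1) * ((k : ℤ) - i + 1) *
        ichoose ((n : ℤ) - s) ((k : ℤ) - i + 1)
      - ((gStar g s j).card : ℤ) * ichoose ((n : ℤ) - s) ((k : ℤ) - j - 1) *
        ichoose ((n : ℤ) - s - k + j + 1) 2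
      - (zeta2v (j - 1) s (gStar g s j) (F.image fun A => A ∩ Iv s) : ℤ) *
        ichoose ((n : ℤ) - s) ((k : ℤ) - j)
      - ((gStar g s j).card : ℤ) * ((s : ℤ) - j) * ((k : ℤ) - j + 1) *
        ichoose ((n : ℤ) - s) ((k : ℤ) - j)
      ≤ (zeta (k - 1) F₁ : ℤ) - (zeta (k - 1) F : ℤ) := by
  exact stmt_7_general n k i j s F g hLC hgen hanti hs hij F₁ hF₁
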